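/- Let a : Σ → ℕ be an arity and R an algebraic conditional rewrite system that respects a. If →_R is confluent on AN_a, then →_{β∪R(β)} = →β ∪ →_{R(β)} is confluent on AN_a. -/

import Mathlib

/-!
Evaluating a term of `AN_a` to its β-normal form turns every `β ∪ R(β)`-step into a sequence of
`R`-steps between β-normal forms; confluence of `R` on `AN_a` then transfers to `β ∪ R(β)`
(`R ⊆ R(β)` and each term reduces to its β-normal form).

The core is `simulates_bcondRel`, by induction on the stratum `i`: if `t` has an arity-respecting
β-normal form `n` and `t` rewrites to `u` by `β` or `R(β)_i`, then `u` has an arity-respecting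
β-normal form `n'`, and `n` rewrites to `n'` by `R_i` in some number of steps. The induction step
(`NestPar.normalForm`) is proved for nested parallel rewriting, which contains `R(β)_i` and is
closed under substituting rewritten terms.

* A redex `lσ` may sit under β-redexes, be duplicated, instantiated or erased by them, and in the
  erased case nothing is known about the normalization of `σ`. Hence the evaluation of `t` is
  followed along a leftmost (standard) reduction, which never enters an erased subterm. The
  standardization theorem (`Std.of_beta`) is proved in Kashima's style. A head β-step commutes with
  nested parallel rewriting (`NestPar.head_comm`), since a term headed by an abstraction is not an
  instance of a left-hand side.
* When a standard reduction reaches `lσ`, the algebraic term `l` is preserved, so that `σ`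
  evaluates to some `σ'` on the variables of `l`, and the normal form is `lσ'`. The sides of the
  conditions evaluate to `dσ'` and `cσ'`, so that by induction on the stratum their joinability
  with respect to `β ∪ R(β)_{i-1}` gives joinability with respect to `R_{i-1}`, and the rule
  applies to `lσ'`.
* `lσ'` already carries as many arguments as the arity allows, so that it is not the head of a
  further application and replacing it by `rσ'`, which may be an abstraction, creates no β-redex.
-/


set_option autoImplicit false

/-- λ-terms over a signature `Sig`, in de Bruijn representation
(terms are identified up to α-conversion). -/
inductive Tm (Sig : Type) : Type
  | var : ℕ → Tm Sig
  | app : Tm Sig → Tm Sig → Tm Sig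
  | lam : Tm Sig → Tm Sig
  | sym : Sig → Tm Sig

namespace Tm

variable {Sig : Type}

/-- Shift the free de Bruijn indices `≥ d` up by one. -/
def lift (d : ℕ) : Tm Sig → Tm Sig
  | var n => if n < d then var n else var (n + 1)
  | app t u => app (lift d t) (lift d u)
  | lam t => lam (lift (d + 1) t)
  | sym f => sym f

/-- Lift a parallel substitution under one binder. -/
def up (σ : ℕ → Tm Sig) : ℕ → Tm Sig
  | 0 => var 0
  | n + 1 => lift 0 (σ n)

/-- Capture-avoiding (parallel) substitution. -/
def subst (σ : ℕ → Tm Sig) : Tm Sig → Tm Sig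
  | var n => σ n
  | app t u => app (subst σ t) (subst σ u)
  | lam t => lam (subst (up σ) t)
  | sym f => sym f

def scons (u : Tm Sig) (σ : ℕ → Tm Sig) : ℕ → Tm Sig
  | 0 => u
  | n + 1 => σ n

/-- `subst1 u t` substitutes `u` for the de Bruijn variable `0` in `t`. -/
def subst1 (u t : Tm Sig) : Tm Sig := subst (scons u var) t

/-- `FVar t n` : de Bruijn index `n` occurs free in `t`. -/
def FVar : Tm Sig → ℕ → Prop
  | var m, n => m = n
  | app t u, n => FVar t n ∨ FVar u n
  | lam t, n => FVar t (n + 1)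
  | sym _, _ => False

/-- Closed terms. -/
def ClosedTm (t : Tm Sig) : Prop := ∀ n, ¬ FVar t n

def countVar : Tm Sig → ℕ → ℕ
  | var m, n => if m = n then 1 else 0
  | app t u, n => countVar t n + countVar u n
  | lam t, n => countVar t (n + 1)
  | sym _, _ => 0

/-- Linear terms: each variable occurs at most once. -/
def LinearTm (t : Tm Sig) : Prop := ∀ n, countVar t n ≤ 1

/-- `appList h [t1, …, tn] = h t1 … tn`. -/
def appList (h : Tm Sig) : List (Tm Sig) → Tm Sig
  | [] => h
  | u :: us => appList (app h u) us

/-- Applicative terms: terms containing no abstraction. -/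
inductive Applicative : Tm Sig → Prop
  | var (n : ℕ) : Applicative (var n)
  | sym (f : Sig) : Applicative (sym f)
  | app {t u : Tm Sig} : Applicative t → Applicative u → Applicative (app t u)

/-- Algebraic terms: `t ::= x | f t1 … tn`. -/
inductive Algebraic : Tm Sig → Prop
  | var (n : ℕ) : Algebraic (var n)
  | symApp (f : Sig) (ts : List (Tm Sig)) :
      (∀ t ∈ ts, Algebraic t) → Algebraic (appList (sym f) ts)

/-- `Subterm s t` : `s` is a subterm of `t`. -/
inductive Subterm : Tm Sig → Tm Sig → Prop
  | refl (t : Tm Sig) : Subterm t t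
  | appL {s t u : Tm Sig} : Subterm s t → Subterm s (app t u)
  | appR {s t u : Tm Sig} : Subterm s u → Subterm s (app t u)
  | lam {s t : Tm Sig} : Subterm s t → Subterm s (lam t)

/-- `lamN m t = λ…λ.t` with `m` abstractions. -/
def lamN : ℕ → Tm Sig → Tm Sig
  | 0, t => t
  | m + 1, t => lam (lamN m t)

end Tm

/-- β-reduction: the smallest rewrite relation (closed under abstraction, left and
right application and substitution) with `(λ.t) u →β t[0 := u]`. -/
inductive Beta {Sig : Type} : Tm Sig → Tm Sig → Prop
  | beta (t u : Tm Sig) : Beta (Tm.app (Tm.lam t) u) (Tm.subst1 u t)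
  | abs {t u : Tm Sig} : Beta t u → Beta (Tm.lam t) (Tm.lam u)
  | appL {t u v : Tm Sig} : Beta t u → Beta (Tm.app t v) (Tm.app u v)
  | appR {t u v : Tm Sig} : Beta t u → Beta (Tm.app v t) (Tm.app v u)
  | substC (σ : ℕ → Tm Sig) {t u : Tm Sig} : Beta t u → Beta (Tm.subst σ t) (Tm.subst σ u)

/-- Tait–Martin-Löf parallel β-reduction: the smallest parallel rewrite relation
with `(λ.t₁) t₂ ▷β u₁[0 := u₂]` whenever `t₁ ▷β u₁` and `t₂ ▷β u₂`. -/
inductive PBeta {Sig : Type} : Tm Sig → Tm Sig → Prop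
  | var (n : ℕ) : PBeta (Tm.var n) (Tm.var n)
  | sym (f : Sig) : PBeta (Tm.sym f) (Tm.sym f)
  | app {t₁ u₁ t₂ u₂ : Tm Sig} : PBeta t₁ u₁ → PBeta t₂ u₂ →
      PBeta (Tm.app t₁ t₂) (Tm.app u₁ u₂)
  | abs {t u : Tm Sig} : PBeta t u → PBeta (Tm.lam t) (Tm.lam u)
  | substC (σ : ℕ → Tm Sig) {t u : Tm Sig} : PBeta t u → PBeta (Tm.subst σ t) (Tm.subst σ u)
  | beta {t₁ u₁ t₂ u₂ : Tm Sig} : PBeta t₁ u₁ → PBeta t₂ u₂ →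
      PBeta (Tm.app (Tm.lam t₁) t₂) (Tm.subst1 u₂ u₁)

/-- β-normal forms. -/
def BetaNormal {Sig : Type} (t : Tm Sig) : Prop := ∀ u, ¬ Beta t u

/-- `IsBnf t n` : `n` is a β-normal form of `t`. -/
def IsBnf {Sig : Type} (t n : Tm Sig) : Prop :=
  Relation.ReflTransGen Beta t n ∧ BetaNormal n

/-- Weakly β-normalizing terms. -/
def WNbeta {Sig : Type} (t : Tm Sig) : Prop := ∃ n, IsBnf t n

/-- Conditional rewrite rule `d1 = c1 ∧ … ∧ dn = cn ⊃ l ↦ r`:  every variable of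
the `di`, `ci` and `r` occurs in `l`, and `l` is a non-variable algebraic term. -/
structure CondRule (Sig : Type) where
  conds : List (Tm Sig × Tm Sig)
  lhs : Tm Sig
  rhs : Tm Sig
  lhs_alg : Tm.Algebraic lhs
  lhs_not_var : ∀ n, lhs ≠ Tm.var n
  fv_conds : ∀ p ∈ conds,
    (∀ n, Tm.FVar p.1 n → Tm.FVar lhs n) ∧ (∀ n, Tm.FVar p.2 n → Tm.FVar lhs n)
  fv_rhs : ∀ n, Tm.FVar rhs n → Tm.FVar lhs n

/-- Joinability: a common reduct. -/
def Joinable {α : Type} (R : α → α → Prop) (t u : α) : Prop :=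
  ∃ v, Relation.ReflTransGen R t v ∧ Relation.ReflTransGen R u v

/-- One stratum of conditional rewriting: the smallest rewrite relation such that
`lσ → rσ` for every rule whose conditions are joinable w.r.t. `prev`. -/
inductive CondStep {Sig : Type} (Rules : Set (CondRule Sig))
    (prev : Tm Sig → Tm Sig → Prop) : Tm Sig → Tm Sig → Prop
  | rule {ρ : CondRule Sig} (hρ : ρ ∈ Rules) (σ : ℕ → Tm Sig)
      (hconds : ∀ p ∈ ρ.conds, Joinable prev (Tm.subst σ p.1) (Tm.subst σ p.2)) :
      CondStep Rules prev (Tm.subst σ ρ.lhs) (Tm.subst σ ρ.rhs)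
  | abs {t u : Tm Sig} : CondStep Rules prev t u →
      CondStep Rules prev (Tm.lam t) (Tm.lam u)
  | appL {t u v : Tm Sig} : CondStep Rules prev t u →
      CondStep Rules prev (Tm.app t v) (Tm.app u v)
  | appR {t u v : Tm Sig} : CondStep Rules prev t u →
      CondStep Rules prev (Tm.app v t) (Tm.app v u)
  | substC (σ : ℕ → Tm Sig) {t u : Tm Sig} : CondStep Rules prev t u →
      CondStep Rules prev (Tm.subst σ t) (Tm.subst σ u)

/-- Stratified conditional rewriting `→_{R_i}`. -/
def CondRel {Sig : Type} (Rules : Set (CondRule Sig)) : ℕ → Tm Sig → Tm Sig → Prop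
  | 0 => fun _ _ => False
  | i + 1 => CondStep Rules (CondRel Rules i)

/-- Conditional rewriting `→_R = ⋃ i, →_{R_i}`. -/
def CondRew {Sig : Type} (Rules : Set (CondRule Sig)) (t u : Tm Sig) : Prop :=
  ∃ i, CondRel Rules i t u

/-- Stratified β-conditional rewriting `→_{R(β)_i}`: conditions are evaluated
w.r.t. `→_{β ∪ R(β)_{i-1}}`. -/
def BCondRel {Sig : Type} (Rules : Set (CondRule Sig)) : ℕ → Tm Sig → Tm Sig → Prop
  | 0 => fun _ _ => False
  | i + 1 => CondStep Rules (fun a b => Beta a b ∨ BCondRel Rules i a b)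

/-- β-conditional rewriting `→_{R(β)} = ⋃ i, →_{R(β)_i}`. -/
def BCondRew {Sig : Type} (Rules : Set (CondRule Sig)) (t u : Tm Sig) : Prop :=
  ∃ i, BCondRel Rules i t u

def IsConfluent {α : Type} (R : α → α → Prop) : Prop :=
  ∀ t u v, Relation.ReflTransGen R t u → Relation.ReflTransGen R t v →
    ∃ w, Relation.ReflTransGen R u w ∧ Relation.ReflTransGen R v w

def ConfluentOn {α : Type} (S : Set α) (R : α → α → Prop) : Prop :=
  ∀ t ∈ S, ∀ u v, Relation.ReflTransGen R t u → Relation.ReflTransGen R t v →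
    ∃ w, Relation.ReflTransGen R u w ∧ Relation.ReflTransGen R v w

def Commutes {α : Type} (R₁ R₂ : α → α → Prop) : Prop :=
  ∀ s u t, Relation.ReflTransGen R₁ s u → Relation.ReflTransGen R₂ s t →
    ∃ v, Relation.ReflTransGen R₂ u v ∧ Relation.ReflTransGen R₁ t v

def LeftLinear {Sig : Type} (Rules : Set (CondRule Sig)) : Prop :=
  ∀ ρ ∈ Rules, Tm.LinearTm ρ.lhs

/-- Semi-closed systems: in every rule the `ci` are closed applicative terms. -/
def SemiClosed {Sig : Type} (Rules : Set (CondRule Sig)) : Prop :=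
  ∀ ρ ∈ Rules, ∀ p ∈ ρ.conds, Tm.Applicative p.2 ∧ Tm.ClosedTm p.2

def RightApplicative {Sig : Type} (Rules : Set (CondRule Sig)) : Prop :=
  ∀ ρ ∈ Rules, Tm.Applicative ρ.rhs

def RightAlgebraic {Sig : Type} (Rules : Set (CondRule Sig)) : Prop :=
  ∀ ρ ∈ Rules, Tm.Algebraic ρ.rhs

/-- Algebraic systems: in every rule the `di`, `ci` and `r` are algebraic. -/
def AlgebraicSys {Sig : Type} (Rules : Set (CondRule Sig)) : Prop :=
  ∀ ρ ∈ Rules, (∀ p ∈ ρ.conds, Tm.Algebraic p.1 ∧ Tm.Algebraic p.2) ∧ Tm.Algebraic ρ.rhs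

/-- A term respects the arity `a` if it contains no subterm `f t1 … tn` with `n > a f`. -/
def RespectsArity {Sig : Type} (a : Sig → ℕ) (t : Tm Sig) : Prop :=
  ∀ (f : Sig) (ts : List (Tm Sig)),
    Tm.Subterm (Tm.appList (Tm.sym f) ts) t → ts.length ≤ a f

/-- A conditional rule respects `a` if the `di`, `ci` and both sides of `l ↦ r`
respect `a`, and `l = f l1 … lk` with `k = a f`. -/
def RuleRespectsArity {Sig : Type} (a : Sig → ℕ) (ρ : CondRule Sig) : Prop :=
  (∀ p ∈ ρ.conds, RespectsArity a p.1 ∧ RespectsArity a p.2) ∧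
  RespectsArity a ρ.lhs ∧ RespectsArity a ρ.rhs ∧
  ∃ (f : Sig) (ls : List (Tm Sig)), ρ.lhs = Tm.appList (Tm.sym f) ls ∧ ls.length = a f

def SysRespectsArity {Sig : Type} (a : Sig → ℕ) (Rules : Set (CondRule Sig)) : Prop :=
  ∀ ρ ∈ Rules, RuleRespectsArity a ρ

/-- `AN_a` : terms having a β-normal form, whose β-normal form respects `a`. -/
def ANset {Sig : Type} (a : Sig → ℕ) : Set (Tm Sig) :=
  {t | ∃ n, IsBnf t n ∧ RespectsArity a n}

/-- The rewrite relation of the unconditional system `R̄` containing `l ↦ di` and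
`l ↦ r` for each rule `d⃗ = c⃗ ⊃ l ↦ r` of `R`. -/
inductive BarRel {Sig : Type} (Rules : Set (CondRule Sig)) : Tm Sig → Tm Sig → Prop
  | ruleCond {ρ : CondRule Sig} (hρ : ρ ∈ Rules) {p : Tm Sig × Tm Sig} (hp : p ∈ ρ.conds)
      (σ : ℕ → Tm Sig) : BarRel Rules (Tm.subst σ ρ.lhs) (Tm.subst σ p.1)
  | ruleRhs {ρ : CondRule Sig} (hρ : ρ ∈ Rules) (σ : ℕ → Tm Sig) :
      BarRel Rules (Tm.subst σ ρ.lhs) (Tm.subst σ ρ.rhs)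
  | abs {t u : Tm Sig} : BarRel Rules t u → BarRel Rules (Tm.lam t) (Tm.lam u)
  | appL {t u v : Tm Sig} : BarRel Rules t u → BarRel Rules (Tm.app t v) (Tm.app u v)
  | appR {t u v : Tm Sig} : BarRel Rules t u → BarRel Rules (Tm.app v t) (Tm.app v u)
  | substC (σ : ℕ → Tm Sig) {t u : Tm Sig} : BarRel Rules t u →
      BarRel Rules (Tm.subst σ t) (Tm.subst σ u)

/-- Conditionally `(R, a)`-stable sets of terms. -/
def CondStable {Sig : Type} (Rules : Set (CondRule Sig)) (a : Sig → ℕ)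
    (S : Set (Tm Sig)) : Prop :=
  (∀ t ∈ S, RespectsArity a t) ∧
  (∀ t ∈ S, ∀ u, (Beta t u ∨ BarRel Rules t u) → u ∈ S) ∧
  (∀ t ∈ S, ∀ u, Tm.Subterm u t → u ∈ S)

/-- Head β-step along an application spine. -/
inductive HeadAux {Sig : Type} : Tm Sig → Tm Sig → Prop
  | beta (b a₀ : Tm Sig) : HeadAux (Tm.app (Tm.lam b) a₀) (Tm.subst1 a₀ b)
  | app {t u : Tm Sig} (v : Tm Sig) : HeadAux t u → HeadAux (Tm.app t v) (Tm.app u v)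

/-- Head β-reduction `→h` : `λx⃗.(λy.b) a₀ a₁ … aₙ →h λx⃗.b[y:=a₀] a₁ … aₙ`. -/
inductive HeadRed {Sig : Type} : Tm Sig → Tm Sig → Prop
  | base {t u : Tm Sig} : HeadAux t u → HeadRed t u
  | lam {t u : Tm Sig} : HeadRed t u → HeadRed (Tm.lam t) (Tm.lam u)

/-- The relation `≻` : (a) `λx⃗.v a1 … an ≻ ai` for `v` a variable or a symbol and
`n > 0`; (b) `λx⃗.(λy.b) a0 a1 … an ≻ λx⃗.b[y:=a0] a1 … an` (a head β-step). -/
def SuccRel {Sig : Type} (t u : Tm Sig) : Prop :=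
  (∃ (m : ℕ) (h : Tm Sig) (args : List (Tm Sig)),
    ((∃ n, h = Tm.var n) ∨ (∃ f, h = Tm.sym f)) ∧ args ≠ [] ∧
    t = Tm.lamN m (Tm.appList h args) ∧ u ∈ args)
  ∨ HeadRed t u

/-- The nested parallelization `▷_{R_i}` of `→_{R_i}`: the smallest parallel rewrite
relation with `lσ ▷ rτ` whenever `lσ →_{R_i} rσ` and `σ ▷ τ`. -/
inductive NPar {Sig : Type} (Rules : Set (CondRule Sig)) (i : ℕ) : Tm Sig → Tm Sig → Prop
  | var (n : ℕ) : NPar Rules i (Tm.var n) (Tm.var n)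
  | sym (f : Sig) : NPar Rules i (Tm.sym f) (Tm.sym f)
  | app {t₁ u₁ t₂ u₂ : Tm Sig} : NPar Rules i t₁ u₁ → NPar Rules i t₂ u₂ →
      NPar Rules i (Tm.app t₁ t₂) (Tm.app u₁ u₂)
  | abs {t u : Tm Sig} : NPar Rules i t u → NPar Rules i (Tm.lam t) (Tm.lam u)
  | substC (σ : ℕ → Tm Sig) {t u : Tm Sig} : NPar Rules i t u →
      NPar Rules i (Tm.subst σ t) (Tm.subst σ u)
  | rule {ρ : CondRule Sig} (hρ : ρ ∈ Rules) (σ τ : ℕ → Tm Sig)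
      (hstep : CondRel Rules i (Tm.subst σ ρ.lhs) (Tm.subst σ ρ.rhs))
      (hστ : ∀ n, NPar Rules i (σ n) (τ n)) :
      NPar Rules i (Tm.subst σ ρ.lhs) (Tm.subst τ ρ.rhs)

/-- The smallest parallel rewrite relation containing `R`. -/
inductive ParCl {Sig : Type} (R : Tm Sig → Tm Sig → Prop) : Tm Sig → Tm Sig → Prop
  | base {t u : Tm Sig} : R t u → ParCl R t u
  | var (n : ℕ) : ParCl R (Tm.var n) (Tm.var n)
  | sym (f : Sig) : ParCl R (Tm.sym f) (Tm.sym f)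
  | app {t₁ u₁ t₂ u₂ : Tm Sig} : ParCl R t₁ u₁ → ParCl R t₂ u₂ →
      ParCl R (Tm.app t₁ t₂) (Tm.app u₁ u₂)
  | abs {t u : Tm Sig} : ParCl R t u → ParCl R (Tm.lam t) (Tm.lam u)
  | substC (σ : ℕ → Tm Sig) {t u : Tm Sig} : ParCl R t u →
      ParCl R (Tm.subst σ t) (Tm.subst σ u)

/-- A rooted β-conditional rewrite step `lσ →_{R(β)_i} rσ` for the rule `ρ` and the
substitution `σ`: `ρ ∈ R` and the conditions of `ρ` instantiated by `σ` are joinable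
w.r.t. `→_{β ∪ R(β)_{i-1}}`. -/
def RootedBStep {Sig : Type} (Rules : Set (CondRule Sig)) :
    ℕ → CondRule Sig → (ℕ → Tm Sig) → Prop
  | 0 => fun _ _ => False
  | i + 1 => fun ρ σ => ρ ∈ Rules ∧
      ∀ p ∈ ρ.conds,
        Joinable (fun a b => Beta a b ∨ BCondRel Rules i a b)
          (Tm.subst σ p.1) (Tm.subst σ p.2)

/-- Subterm at a position (positions only descend through applications, which is
enough for algebraic left-hand sides). -/
def subtermAt {Sig : Type} : Tm Sig → List Bool → Option (Tm Sig)
  | t, [] => some t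
  | Tm.app a _, false :: p => subtermAt a p
  | Tm.app _ b, true :: p => subtermAt b p
  | _, _ :: _ => none

/-- Replacement at a position. -/
def replaceAt {Sig : Type} : Tm Sig → List Bool → Tm Sig → Option (Tm Sig)
  | _, [], s => some s
  | Tm.app a b, false :: p, s => (replaceAt a p s).map (fun a' => Tm.app a' b)
  | Tm.app a b, true :: p, s => (replaceAt b p s).map (fun b' => Tm.app a b')
  | _, _ :: _, _ => none

/-- Conditional critical pairs: an overlap of `ρ₂` at a non-variable position `p` of
the left-hand side of `ρ₁` via a most general unifier (here presented with a pair of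
substitutions, which accounts for variable-disjoint renamings). -/
def CriticalPair {Sig : Type} (Rules : Set (CondRule Sig))
    (conds : List (Tm Sig × Tm Sig)) (s t : Tm Sig) : Prop :=
  ∃ ρ₁ ∈ Rules, ∃ ρ₂ ∈ Rules, ∃ (p : List Bool) (w : Tm Sig) (σ₁ σ₂ : ℕ → Tm Sig),
    subtermAt ρ₁.lhs p = some w ∧
    (∀ n, w ≠ Tm.var n) ∧
    ¬ (ρ₁ = ρ₂ ∧ p = []) ∧
    Tm.subst σ₁ w = Tm.subst σ₂ ρ₂.lhs ∧
    (∀ τ₁ τ₂ : ℕ → Tm Sig, Tm.subst τ₁ w = Tm.subst τ₂ ρ₂.lhs →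
      ∃ δ : ℕ → Tm Sig, (∀ n, Tm.FVar ρ₁.lhs n → τ₁ n = Tm.subst δ (σ₁ n)) ∧
        (∀ n, Tm.FVar ρ₂.lhs n → τ₂ n = Tm.subst δ (σ₂ n))) ∧
    conds = ρ₁.conds.map (fun q => (Tm.subst σ₁ q.1, Tm.subst σ₁ q.2)) ++
            ρ₂.conds.map (fun q => (Tm.subst σ₂ q.1, Tm.subst σ₂ q.2)) ∧
    replaceAt (Tm.subst σ₁ ρ₁.lhs) p (Tm.subst σ₂ ρ₂.rhs) = some s ∧
    t = Tm.subst σ₁ ρ₁.rhs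

/-- A symbol is defined if it heads the left-hand side of some rule. -/
def DefinedSym {Sig : Type} (Rules : Set (CondRule Sig)) (f : Sig) : Prop :=
  ∃ ρ ∈ Rules, ∃ ts : List (Tm Sig), ρ.lhs = Tm.appList (Tm.sym f) ts

/-- OrthonormalSys systems. -/
def OrthonormalSys {Sig : Type} (Rules : Set (CondRule Sig)) : Prop :=
  LeftLinear Rules ∧
  (∀ ρ ∈ Rules, ∀ p ∈ ρ.conds, Tm.ClosedTm p.2 ∧ BetaNormal p.2 ∧
    ∀ f, DefinedSym Rules f → ¬ Tm.Subterm (Tm.sym f) p.2) ∧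
  (∀ (conds : List (Tm Sig × Tm Sig)) (s t : Tm Sig), CriticalPair Rules conds s t →
    ∃ i j : Fin conds.length, i ≠ j ∧
      (conds.get i).1 = (conds.get j).1 ∧ (conds.get i).2 ≠ (conds.get j).2)

/-- Dershowitz–Manna multiset extension of `<` on `ℕ`. -/
def MulLt (s t : Multiset ℕ) : Prop :=
  ∃ X Y Z : Multiset ℕ, Y ≠ 0 ∧ s = Z + X ∧ t = Z + Y ∧ ∀ x ∈ X, ∃ y ∈ Y, x < y

namespace BetaCond

open Relation Tm

variable {Sig : Type}

/-! ### Substitution calculus -/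

/-- Renaming of the free de Bruijn indices. -/
def ren (ξ : ℕ → ℕ) : Tm Sig → Tm Sig
  | var n => var (ξ n)
  | app t u => app (ren ξ t) (ren ξ u)
  | lam t => lam (ren (fun n => Nat.casesOn n 0 (fun m => ξ m + 1)) t)
  | sym f => sym f

theorem lift_eq_ren (t : Tm Sig) : ∀ d, lift d t = ren (fun n => if n < d then n else n + 1) t := by
  induction t with
  | var n => intro d; simp only [lift, ren]; split <;> rfl
  | app t u iht ihu => intro d; simp [lift, ren, iht, ihu]
  | sym f => intro d; rfl
  | lam t ih =>
    intro d
    simp only [lift, ren, ih]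
    congr 2
    funext n
    cases n with
    | zero => simp
    | succ n => by_cases h : n < d <;> simp [h]

theorem lift_zero (t : Tm Sig) : lift 0 t = ren Nat.succ t := by
  rw [lift_eq_ren]; rfl

theorem subst_ren (t : Tm Sig) : ∀ (ξ : ℕ → ℕ) (σ : ℕ → Tm Sig),
    subst σ (ren ξ t) = subst (fun n => σ (ξ n)) t := by
  induction t with
  | var n => intros; rfl
  | app t u iht ihu => intros; simp [subst, ren, iht, ihu]
  | sym f => intros; rfl
  | lam t ih =>
    intro ξ σ
    simp only [subst, ren, ih]
    congr 2
    funext n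
    cases n <;> rfl

theorem ren_eq_subst (t : Tm Sig) : ∀ ξ : ℕ → ℕ, ren ξ t = subst (fun n => var (ξ n)) t := by
  induction t with
  | var n => intros; rfl
  | app t u iht ihu => intros; simp [subst, ren, iht, ihu]
  | sym f => intros; rfl
  | lam t ih =>
    intro ξ
    simp only [subst, ren, ih]
    congr 2
    funext n
    cases n <;> rfl

theorem ren_subst (t : Tm Sig) : ∀ (ξ : ℕ → ℕ) (σ : ℕ → Tm Sig),
    ren ξ (subst σ t) = subst (fun n => ren ξ (σ n)) t := by
  induction t with
  | var n => intros; rfl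
  | app t u iht ihu => intros; simp [subst, ren, iht, ihu]
  | sym f => intros; rfl
  | lam t ih =>
    intro ξ σ
    simp only [subst, ren, ih]
    congr 2
    funext n
    cases n with
    | zero => rfl
    | succ n =>
      simp only [up, lift_zero]
      rw [ren_eq_subst (ren Nat.succ (σ n)), subst_ren, ren_eq_subst (ren ξ (σ n)),
        subst_ren]

theorem subst_subst (t : Tm Sig) : ∀ σ τ : ℕ → Tm Sig,
    subst σ (subst τ t) = subst (fun n => subst σ (τ n)) t := by
  induction t with
  | var n => intros; rfl
  | app t u iht ihu => intros; simp [subst, iht, ihu]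
  | sym f => intros; rfl
  | lam t ih =>
    intro σ τ
    simp only [subst, ih]
    congr 2
    funext n
    cases n with
    | zero => rfl
    | succ n =>
      simp only [up, lift_zero, subst_ren, ren_subst]

theorem subst_var (t : Tm Sig) : subst var t = t := by
  induction t with
  | var n => rfl
  | app t u iht ihu => simp [subst, iht, ihu]
  | sym f => rfl
  | lam t ih =>
    have : up (var : ℕ → Tm Sig) = var := by
      funext n; cases n <;> rfl
    simp [subst, this, ih]

theorem subst_scons_up (u : Tm Sig) (σ : ℕ → Tm Sig) (t : Tm Sig) :
    subst1 u (subst (up σ) t) = subst (scons u σ) t := by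
  rw [subst1, subst_subst]
  congr 1
  funext n
  cases n with
  | zero => rfl
  | succ n => simp only [up, lift_zero, subst_ren, scons, subst_var]

theorem subst_subst1 (σ : ℕ → Tm Sig) (u t : Tm Sig) :
    subst σ (subst1 u t) = subst1 (subst σ u) (subst (up σ) t) := by
  rw [subst_scons_up, subst1, subst_subst]
  congr 1
  funext n
  cases n <;> rfl

theorem lift_zero_subst (t : Tm Sig) : lift 0 t = subst (fun n => var (n + 1)) t := by
  rw [lift_zero, ren_eq_subst]

/-! ### Confluence of β -/

theorem star_mono {R S : Tm Sig → Tm Sig → Prop} (hRS : ∀ t u, R t u → S t u) {t u : Tm Sig}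
    (h : ReflTransGen R t u) : ReflTransGen S t u :=
  h.lift id hRS

theorem appList_congr {R : Tm Sig → Tm Sig → Prop}
    (hR : ∀ {t u v}, R t u → R (app t v) (app u v)) :
    ∀ (us : List (Tm Sig)) {t u : Tm Sig}, R t u → R (appList t us) (appList u us)
  | [], _, _, h => h
  | _ :: us, _, _, h => appList_congr hR us (hR h)

theorem star_app {R : Tm Sig → Tm Sig → Prop} (hl : ∀ {t u v}, R t u → R (app t v) (app u v))
    (hr : ∀ {t u v}, R t u → R (app v t) (app v u)) {t t' u u' : Tm Sig}
    (h : ReflTransGen R t t') (h' : ReflTransGen R u u') :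
    ReflTransGen R (app t u) (app t' u') :=
  (h.lift (fun x => app x u) fun _ _ => hl).trans (h'.lift (fun x => app t' x) fun _ _ => hr)

/-- Parallel β-reduction, defined without closure under substitution so that it can be inverted. -/
inductive Par : Tm Sig → Tm Sig → Prop
  | var (n : ℕ) : Par (var n) (var n)
  | sym (f : Sig) : Par (sym f) (sym f)
  | app {t t' u u' : Tm Sig} : Par t t' → Par u u' → Par (app t u) (app t' u')
  | lam {t t' : Tm Sig} : Par t t' → Par (lam t) (lam t')
  | beta {t t' u u' : Tm Sig} : Par t t' → Par u u' → Par (app (lam t) u) (subst1 u' t')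

theorem Par.refl : ∀ t : Tm Sig, Par t t
  | .var n => .var n
  | .sym f => .sym f
  | .app t u => .app (Par.refl t) (Par.refl u)
  | .lam t => .lam (Par.refl t)

theorem Par.subst_same {t t' : Tm Sig} (h : Par t t') :
    ∀ σ : ℕ → Tm Sig, Par (subst σ t) (subst σ t') := by
  induction h with
  | var n => intro σ; exact Par.refl _
  | sym f => intro σ; exact Par.refl _
  | app _ _ ih₁ ih₂ => intro σ; exact .app (ih₁ σ) (ih₂ σ)
  | lam _ ih => intro σ; exact .lam (ih _)
  | beta _ _ ih₁ ih₂ => intro σ; rw [subst_subst1]; exact .beta (ih₁ _) (ih₂ σ)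

theorem Par.up {σ σ' : ℕ → Tm Sig} (h : ∀ n, Par (σ n) (σ' n)) (n : ℕ) :
    Par (up σ n) (up σ' n) := by
  cases n with
  | zero => exact Par.refl _
  | succ n => simp only [Tm.up, lift_zero_subst]; exact (h n).subst_same _

theorem Par.subst {t t' : Tm Sig} (h : Par t t') :
    ∀ σ σ' : ℕ → Tm Sig, (∀ n, Par (σ n) (σ' n)) → Par (subst σ t) (subst σ' t') := by
  induction h with
  | var n => intro σ σ' hσ; exact hσ n
  | sym f => intro σ σ' _; exact Par.refl _
  | app _ _ ih₁ ih₂ => intro σ σ' hσ; exact .app (ih₁ _ _ hσ) (ih₂ _ _ hσ)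
  | lam _ ih => intro σ σ' hσ; exact .lam (ih _ _ (Par.up hσ))
  | beta _ _ ih₁ ih₂ =>
    intro σ σ' hσ
    rw [subst_subst1]
    exact .beta (ih₁ _ _ (Par.up hσ)) (ih₂ _ _ hσ)

theorem Par.subst1 {t t' u u' : Tm Sig} (ht : Par t t') (hu : Par u u') :
    Par (subst1 u t) (subst1 u' t') :=
  ht.subst _ _ fun n => by cases n <;> first | exact hu | exact Par.refl _

theorem Par.of_beta {t u : Tm Sig} (h : Beta t u) : Par t u := by
  induction h with
  | beta t u => exact .beta (Par.refl _) (Par.refl _)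
  | abs _ ih => exact .lam ih
  | appL _ ih => exact .app ih (Par.refl _)
  | appR _ ih => exact .app (Par.refl _) ih
  | substC σ _ ih => exact ih.subst_same σ

theorem Par.to_beta {t u : Tm Sig} (h : Par t u) : ReflTransGen Beta t u := by
  induction h with
  | var n => exact .refl
  | sym f => exact .refl
  | app _ _ ih₁ ih₂ => exact star_app .appL .appR ih₁ ih₂
  | lam _ ih => exact ih.lift Tm.lam fun _ _ => .abs
  | beta _ _ ih₁ ih₂ =>
    exact (star_app .appL .appR (ih₁.lift Tm.lam fun _ _ => .abs) ih₂).tail (.beta _ _)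

/-- Takahashi's complete development: contract all the β-redexes of a term at once. -/
def dev : Tm Sig → Tm Sig
  | var n => var n
  | sym f => sym f
  | lam t => lam (dev t)
  | app (lam t) u => subst1 (dev u) (dev t)
  | app t u => app (dev t) (dev u)

theorem Par.to_dev {t u : Tm Sig} (h : Par t u) : Par u (dev t) := by
  induction h with
  | var n => exact .var n
  | sym f => exact .sym f
  | @app t t' u u' h₁ _ ih₁ ih₂ =>
    cases t with
    | lam s =>
      cases h₁ with
      | lam _ =>
        simp only [dev] at ih₁ ⊢
        cases ih₁ with
        | lam ih₁ => exact .beta ih₁ ih₂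
    | _ => simp only [dev] at ih₁ ⊢; exact .app ih₁ ih₂
  | lam _ ih => exact .lam ih
  | beta _ _ ih₁ ih₂ => simp only [dev]; exact ih₁.subst1 ih₂

theorem star_par_iff {t u : Tm Sig} : ReflTransGen Par t u ↔ ReflTransGen Beta t u := by
  constructor
  · intro h
    induction h with
    | refl => exact .refl
    | tail _ h ih => exact ih.trans h.to_beta
  · exact star_mono fun _ _ => Par.of_beta

theorem beta_confluent {t u v : Tm Sig} (h₁ : ReflTransGen Beta t u)
    (h₂ : ReflTransGen Beta t v) :
    ∃ w, ReflTransGen Beta u w ∧ ReflTransGen Beta v w := by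
  obtain ⟨w, hu, hv⟩ := Relation.church_rosser (r := Par)
    (fun a b c hb hc => ⟨dev a, .single hb.to_dev, .single hc.to_dev⟩)
    (star_par_iff.2 h₁) (star_par_iff.2 h₂)
  exact ⟨w, star_par_iff.1 hu, star_par_iff.1 hv⟩

/-! ### Standardization -/

theorem headAux_beta {t u : Tm Sig} (h : HeadAux t u) : Beta t u := by
  induction h with
  | beta b a => exact .beta _ _
  | app v _ ih => exact .appL ih

theorem headAux_subst {t u : Tm Sig} (σ : ℕ → Tm Sig) (h : HeadAux t u) :
    HeadAux (subst σ t) (subst σ u) := by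
  induction h with
  | beta b a => rw [subst_subst1]; exact .beta _ _
  | app v _ ih => exact .app _ ih

mutual
/-- Kashima's standard reductions: weak head steps, followed by standard reductions of the
immediate subterms (`StdIn`). -/
inductive Std : Tm Sig → Tm Sig → Prop
  | mk {t s n : Tm Sig} : ReflTransGen HeadAux t s → StdIn s n → Std t n
/-- Standard reduction of the immediate subterms only. -/
inductive StdIn : Tm Sig → Tm Sig → Prop
  | var (n : ℕ) : StdIn (var n) (var n)
  | sym (f : Sig) : StdIn (sym f) (sym f)
  | app {t t' u u' : Tm Sig} : Std t t' → Std u u' → StdIn (app t u) (app t' u')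
  | lam {t t' : Tm Sig} : Std t t' → StdIn (lam t) (lam t')
end

theorem StdIn.std {t n : Tm Sig} (h : StdIn t n) : Std t n := .mk .refl h

theorem Std.head {t s n : Tm Sig} (h : ReflTransGen HeadAux t s) (h' : Std s n) : Std t n := by
  cases h' with
  | mk h₁ h₂ => exact .mk (h.trans h₁) h₂

theorem Std.refl : ∀ t : Tm Sig, Std t t
  | .var n => StdIn.std (.var n)
  | .sym f => StdIn.std (.sym f)
  | .app t u => StdIn.std (.app (Std.refl t) (Std.refl u))
  | .lam t => StdIn.std (.lam (Std.refl t))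

theorem star_headAux_subst {t u : Tm Sig} (σ : ℕ → Tm Sig) (h : ReflTransGen HeadAux t u) :
    ReflTransGen HeadAux (subst σ t) (subst σ u) :=
  h.lift (subst σ) fun _ _ => headAux_subst σ

theorem Std.subst_of (P : (ℕ → Tm Sig) → (ℕ → Tm Sig) → Prop)
    (hP : ∀ σ σ', P σ σ' → ∀ m, Std (σ m) (σ' m))
    (hup : ∀ σ σ', P σ σ' → P (Tm.up σ) (Tm.up σ')) (n : Tm Sig) :
    ∀ (t : Tm Sig) (σ σ' : ℕ → Tm Sig), P σ σ' → Std t n → Std (subst σ t) (subst σ' n) := by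
  induction n with
  | var n =>
    rintro t σ σ' hσ ⟨h, hin⟩
    cases hin
    exact Std.head (star_headAux_subst σ h) (hP _ _ hσ n)
  | sym f =>
    rintro t σ σ' hσ ⟨h, hin⟩
    cases hin
    exact Std.head (star_headAux_subst σ h) (Std.refl _)
  | app n₁ n₂ ih₁ ih₂ =>
    rintro t σ σ' hσ ⟨h, hin⟩
    cases hin with
    | app h₁ h₂ => exact .mk (star_headAux_subst σ h) (.app (ih₁ _ _ _ hσ h₁) (ih₂ _ _ _ hσ h₂))
  | lam n ih =>
    rintro t σ σ' hσ ⟨h, hin⟩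
    cases hin with
    | lam h₁ => exact .mk (star_headAux_subst σ h) (.lam (ih _ _ _ (hup _ _ hσ) h₁))

theorem Std.subst_same {t n : Tm Sig} (h : Std t n) (σ : ℕ → Tm Sig) :
    Std (subst σ t) (subst σ n) :=
  Std.subst_of Eq (fun _ _ e _ => e ▸ Std.refl _) (fun _ _ e => e ▸ rfl) n t σ σ rfl h

theorem Std.subst {t n : Tm Sig} (h : Std t n) {σ σ' : ℕ → Tm Sig}
    (hσ : ∀ n, Std (σ n) (σ' n)) : Std (subst σ t) (subst σ' n) :=
  Std.subst_of (fun σ σ' => ∀ n, Std (σ n) (σ' n)) (fun _ _ h => h)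
    (fun σ σ' h m => by
      cases m with
      | zero => exact Std.refl _
      | succ m => simp only [Tm.up, lift_zero_subst]; exact (h m).subst_same _)
    n t _ _ hσ h

/-- A parallel β-step after a standard reduction can be absorbed into it. -/
theorem Std.par {n m : Tm Sig} (h : Par n m) : ∀ t, Std t n → Std t m := by
  induction h with
  | var n => exact fun t ht => ht
  | sym f => exact fun t ht => ht
  | app _ _ ih₁ ih₂ =>
    rintro t ⟨h, hin⟩
    cases hin with
    | app h₁ h₂ => exact .mk h (.app (ih₁ _ h₁) (ih₂ _ h₂))
  | lam _ ih =>
    rintro t ⟨h, hin⟩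
    cases hin with
    | lam h₁ => exact .mk h (.lam (ih _ h₁))
  | beta _ _ ih₁ ih₂ =>
    rintro t ⟨h, hin⟩
    cases hin with
    | @app t₁ _ t₂ _ h₁ h₂ =>
      obtain ⟨hh, hin⟩ := h₁
      cases hin with
      | lam h₃ =>
        have hhead := (h.trans (hh.lift (fun x => Tm.app x t₂) fun _ _ => .app t₂)).tail (.beta _ _)
        refine Std.head hhead ((ih₁ _ h₃).subst fun n => ?_)
        cases n with
        | zero => exact ih₂ _ h₂
        | succ n => exact Std.refl _

/-- The standardization theorem. -/
theorem Std.of_beta {t n : Tm Sig} (h : ReflTransGen Beta t n) : Std t n := by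
  induction h with
  | refl => exact Std.refl _
  | tail _ h ih => exact Std.par (Par.of_beta h) _ ih

theorem Std.to_beta {n : Tm Sig} : ∀ {t : Tm Sig}, Std t n → ReflTransGen Beta t n := by
  have head {t s : Tm Sig} (h : ReflTransGen HeadAux t s) : ReflTransGen Beta t s :=
    star_mono (fun _ _ => headAux_beta) h
  induction n with
  | var n => rintro t ⟨h, hin⟩; cases hin; exact head h
  | sym f => rintro t ⟨h, hin⟩; cases hin; exact head h
  | app n₁ n₂ ih₁ ih₂ =>
    rintro t ⟨h, hin⟩
    cases hin with
    | app h₁ h₂ => exact (head h).trans (star_app .appL .appR (ih₁ h₁) (ih₂ h₂))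
  | lam n ih =>
    rintro t ⟨h, hin⟩
    cases hin with
    | lam h₁ => exact (head h).trans ((ih h₁).lift Tm.lam fun _ _ => .abs)

/-! ### Arity-respecting normal forms -/

/-- `NF a k n`: `n` is β-normal and respects `a`, and this remains so for `n` applied to any `k`
arguments with the same property. In particular `n` is not an abstraction if `k > 0`. -/
inductive NF (a : Sig → ℕ) : ℕ → Tm Sig → Prop
  | var (k n : ℕ) : NF a k (var n)
  | sym {k : ℕ} {f : Sig} : k ≤ a f → NF a k (sym f)
  | app {k : ℕ} {t u : Tm Sig} : NF a (k + 1) t → NF a 0 u → NF a k (app t u)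
  | lam {t : Tm Sig} : NF a 0 t → NF a 0 (lam t)

theorem NF.mono {a : Sig → ℕ} {k : ℕ} {t : Tm Sig} (h : NF a k t) : ∀ j ≤ k, NF a j t := by
  induction h with
  | var k n => exact fun j _ => .var j n
  | sym h => exact fun j hj => .sym (hj.trans h)
  | app _ h₂ ih₁ _ => exact fun j hj => .app (ih₁ _ (Nat.succ_le_succ hj)) h₂
  | lam h _ => intro j hj; obtain rfl := Nat.le_zero.1 hj; exact .lam h

theorem NF.of_subst {a : Sig → ℕ} (t : Tm Sig) : ∀ (σ : ℕ → Tm Sig) (k : ℕ),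
    NF a k (subst σ t) → NF a k t := by
  induction t with
  | var n => exact fun _ k _ => .var k n
  | sym f => exact fun _ _ h => h
  | app t u iht ihu => intro σ k h; cases h with | app h₁ h₂ => exact .app (iht _ _ h₁) (ihu _ _ h₂)
  | lam t ih => intro σ k h; cases h with | lam h => exact .lam (ih _ _ h)

theorem not_NF_of_beta {a : Sig → ℕ} {t u : Tm Sig} (h : Beta t u) : ∀ k, ¬ NF a k t := by
  induction h with
  | beta t u => intro k h; cases h with | app h _ => cases h
  | abs _ ih => intro k h; cases h with | lam h => exact ih _ h
  | appL _ ih => intro k h; cases h with | app h _ => exact ih _ h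
  | appR _ ih => intro k h; cases h with | app _ h => exact ih _ h
  | substC σ _ ih => exact fun k h => ih k (h.of_subst)

theorem NF.betaNormal {a : Sig → ℕ} {k : ℕ} {t : Tm Sig} (h : NF a k t) : BetaNormal t :=
  fun _ hb => not_NF_of_beta hb k h

theorem NF.eq_of_star {a : Sig → ℕ} {k : ℕ} {t u : Tm Sig} (h : NF a k t)
    (hs : ReflTransGen Beta t u) : u = t := by
  rcases hs.cases_head with e | ⟨s, hs, _⟩
  · exact e.symm
  · exact (h.betaNormal s hs).elim

theorem NF.unique {a : Sig → ℕ} {k j : ℕ} {t n m : Tm Sig} (hn : NF a k n) (hm : NF a j m)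
    (h₁ : ReflTransGen Beta t n) (h₂ : ReflTransGen Beta t m) : n = m := by
  obtain ⟨w, hw₁, hw₂⟩ := beta_confluent h₁ h₂
  rw [← hn.eq_of_star hw₁, hm.eq_of_star hw₂]

theorem NF.subterm {a : Sig → ℕ} {s t : Tm Sig} (h : Subterm s t) :
    ∀ k, NF a k t → ∃ j, NF a j s := by
  induction h with
  | refl => exact fun k h => ⟨k, h⟩
  | appL _ ih => intro k h; cases h with | app h _ => exact ih _ h
  | appR _ ih => intro k h; cases h with | app _ h => exact ih _ h
  | lam _ ih => intro k h; cases h with | lam h => exact ih _ h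

theorem NF.head_of_appList {a : Sig → ℕ} : ∀ (ts : List (Tm Sig)) (h : Tm Sig) (k : ℕ),
    NF a k (appList h ts) → NF a (k + ts.length) h
  | [], _, _, hn => hn
  | _ :: ts, _, k, hn => by
    have h' := NF.head_of_appList ts _ k hn
    generalize hm : k + ts.length = m at h'
    cases h' with
    | app h _ => subst hm; exact h

theorem NF.respectsArity {a : Sig → ℕ} {k : ℕ} {t : Tm Sig} (h : NF a k t) :
    RespectsArity a t := by
  intro f ts hs
  obtain ⟨j, hj⟩ := NF.subterm hs k h
  have h' := NF.head_of_appList ts _ j hj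
  generalize hm : j + ts.length = m at h'
  cases h' with
  | sym h => omega

theorem subterm_trans {s t u : Tm Sig} (h : Subterm t u) : Subterm s t → Subterm s u := by
  induction h with
  | refl => exact id
  | appL _ ih => exact fun h => .appL (ih h)
  | appR _ ih => exact fun h => .appR (ih h)
  | lam _ ih => exact fun h => .lam (ih h)

theorem subterm_appList_head : ∀ (ts : List (Tm Sig)) (s h : Tm Sig), Subterm s h →
    Subterm s (appList h ts)
  | [], _, _, hs => hs
  | _ :: ts, _, _, hs => subterm_appList_head ts _ _ (.appL hs)

theorem subterm_appList_arg : ∀ (ts : List (Tm Sig)) (h t : Tm Sig), t ∈ ts →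
    Subterm t (appList h ts)
  | u :: ts, h, t, ht => by
    rcases List.mem_cons.1 ht with rfl | ht
    · exact subterm_appList_head ts _ _ (.appR (.refl _))
    · exact subterm_appList_arg ts _ _ ht

theorem respectsArity_subterm {a : Sig → ℕ} {s t : Tm Sig} (h : RespectsArity a t)
    (hs : Subterm s t) : RespectsArity a s :=
  fun f ts h' => h f ts (subterm_trans hs h')

theorem betaNormal_subterm {s t : Tm Sig} (hs : Subterm s t) : BetaNormal t → BetaNormal s := by
  induction hs with
  | refl => exact id
  | appL _ ih => exact fun h => ih fun u hu => h _ (.appL hu)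
  | appR _ ih => exact fun h => ih fun u hu => h _ (.appR hu)
  | lam _ ih => exact fun h => ih fun u hu => h _ (.abs hu)

theorem NF.of_appList {a : Sig → ℕ} (t : Tm Sig) : ∀ us : List (Tm Sig),
    BetaNormal (appList t us) → RespectsArity a (appList t us) → NF a us.length t := by
  induction t with
  | var n => exact fun us _ _ => .var _ n
  | sym f => exact fun us _ hr => .sym (hr f us (.refl _))
  | app t u iht ihu =>
    intro us hn hr
    have hs : Subterm u (appList (Tm.app t u) us) := subterm_appList_head us _ _ (.appR (.refl _))
    exact .app (iht (u :: us) hn hr) (ihu [] (betaNormal_subterm hs hn) (respectsArity_subterm hr hs))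
  | lam t ih =>
    intro us hn hr
    cases us with
    | nil =>
      have hs : Subterm t (appList (Tm.lam t) []) := .lam (.refl _)
      exact .lam (ih [] (betaNormal_subterm hs hn) (respectsArity_subterm hr hs))
    | cons u us => exact (hn _ (appList_congr .appL us (.beta t u))).elim

theorem mem_ANset_iff {a : Sig → ℕ} {t : Tm Sig} :
    t ∈ ANset a ↔ ∃ n, ReflTransGen Beta t n ∧ NF a 0 n :=
  ⟨fun ⟨n, h, hr⟩ => ⟨n, h.1, NF.of_appList n [] h.2 hr⟩,
    fun ⟨n, h, hn⟩ => ⟨n, ⟨h, hn.betaNormal⟩, hn.respectsArity⟩⟩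

open Classical in
/-- The arity-respecting β-normal form of a term, with the junk value `var 0` if there is none. -/
noncomputable def nf (a : Sig → ℕ) (t : Tm Sig) : Tm Sig :=
  if h : ∃ n, ReflTransGen Beta t n ∧ NF a 0 n then h.choose else var 0

theorem nf_eq {a : Sig → ℕ} {t n : Tm Sig} (h : ReflTransGen Beta t n) (hn : NF a 0 n) :
    nf a t = n := by
  have hex : ∃ n, ReflTransGen Beta t n ∧ NF a 0 n := ⟨n, h, hn⟩
  rw [nf, dif_pos hex]
  exact hex.choose_spec.2.unique hn hex.choose_spec.1 h

/-! ### Arity-respecting algebraic terms -/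

/-- `Alg a k t`: `t` applied to `k` algebraic terms is an algebraic term that respects `a`. In
particular `t` is not a variable if `k > 0`. -/
inductive Alg (a : Sig → ℕ) : ℕ → Tm Sig → Prop
  | var (n : ℕ) : Alg a 0 (var n)
  | sym {k : ℕ} {f : Sig} : k ≤ a f → Alg a k (sym f)
  | app {k : ℕ} {t u : Tm Sig} : Alg a (k + 1) t → Alg a 0 u → Alg a k (app t u)

/-- `Lacks a k t`: `t` is a symbol applied to `k` arguments fewer than its arity. -/
inductive Lacks (a : Sig → ℕ) : ℕ → Tm Sig → Prop
  | sym (f : Sig) : Lacks a (a f) (sym f)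
  | app {k : ℕ} {t u : Tm Sig} : Lacks a (k + 1) t → Lacks a k (app t u)

/-- The head of the application spine of the term is a symbol. -/
def SymHead : Tm Sig → Prop
  | sym _ => True
  | app t _ => SymHead t
  | _ => False

theorem Alg.appList {a : Sig → ℕ} : ∀ (ts : List (Tm Sig)) (h : Tm Sig) (k : ℕ),
    Alg a (k + ts.length) h → (∀ t ∈ ts, Alg a 0 t) → Alg a k (appList h ts)
  | [], _, _, hh, _ => hh
  | t :: ts, h, k, hh, hts =>
    Alg.appList ts (.app h t) k
      (.app (by simpa [Nat.add_assoc] using hh) (hts t List.mem_cons_self))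
      fun u hu => hts u (List.mem_cons_of_mem _ hu)

theorem Lacks.appList {a : Sig → ℕ} : ∀ (ts : List (Tm Sig)) (h : Tm Sig) (k : ℕ),
    Lacks a (k + ts.length) h → Lacks a k (appList h ts)
  | [], _, _, hh => hh
  | t :: ts, h, k, hh =>
    Lacks.appList ts (.app h t) k (.app (by simpa [Nat.add_assoc] using hh))

theorem Alg.of_algebraic {a : Sig → ℕ} {t : Tm Sig} (h : Algebraic t) :
    RespectsArity a t → Alg a 0 t := by
  induction h with
  | var n => exact fun _ => .var n
  | symApp f ts _ ih =>
    intro hr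
    refine Alg.appList ts _ 0 (.sym ?_) fun t ht =>
      ih t ht (respectsArity_subterm hr (subterm_appList_arg ts _ t ht))
    simpa using hr f ts (.refl _)

theorem Alg.symHead {a : Sig → ℕ} {k : ℕ} {t : Tm Sig} (h : Alg a k t) :
    0 < k → SymHead t := by
  induction h with
  | var n => exact fun h => absurd h (lt_irrefl _)
  | sym _ => exact fun _ => trivial
  | app _ _ ih _ => exact fun _ => ih (Nat.succ_pos _)

theorem Lacks.symHead {a : Sig → ℕ} {k : ℕ} {t : Tm Sig} (h : Lacks a k t) : SymHead t := by
  induction h with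
  | sym _ => trivial
  | app _ ih => exact ih

theorem SymHead.subst (σ : ℕ → Tm Sig) : ∀ {t : Tm Sig}, SymHead t → SymHead (subst σ t)
  | .sym _, _ => trivial
  | .app t _, h => SymHead.subst σ (t := t) h

theorem SymHead.not_headAux {t u : Tm Sig} (h : HeadAux t u) : ¬ SymHead t := by
  induction h with
  | beta b a => exact id
  | app v _ ih => exact ih

theorem SymHead.stdIn {t n : Tm Sig} (h : SymHead t) (hs : Std t n) : StdIn t n := by
  obtain ⟨hh, hin⟩ := hs
  rcases hh.cases_head with rfl | ⟨s, hs, _⟩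
  · exact hin
  · exact (SymHead.not_headAux hs h).elim

theorem Lacks.le {a : Sig → ℕ} {k : ℕ} {t : Tm Sig} (h : Lacks a k t) (σ : ℕ → Tm Sig) :
    ∀ j, NF a j (Tm.subst σ t) → j ≤ k := by
  induction h with
  | sym f => intro j h; cases h with | sym h => exact h
  | app _ ih => intro j h; cases h with | app h _ => exact Nat.le_of_succ_le_succ (ih _ h)

theorem Alg.subst_NF {a : Sig → ℕ} {k : ℕ} {t : Tm Sig} (h : Alg a k t) {σ : ℕ → Tm Sig} :
    (∀ x, FVar t x → NF a 0 (σ x)) → NF a k (subst σ t) := by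
  induction h with
  | var n => exact fun hσ => hσ n rfl
  | sym h => exact fun _ => .sym h
  | app _ _ ih₁ ih₂ =>
    exact fun hσ => .app (ih₁ fun x hx => hσ x (.inl hx)) (ih₂ fun x hx => hσ x (.inr hx))

theorem Alg.subst_star {a : Sig → ℕ} {k : ℕ} {t : Tm Sig} (h : Alg a k t)
    {R : Tm Sig → Tm Sig → Prop} (hl : ∀ {t u v}, R t u → R (Tm.app t v) (Tm.app u v))
    (hr : ∀ {t u v}, R t u → R (Tm.app v t) (Tm.app v u)) {σ τ : ℕ → Tm Sig} :
    (∀ x, FVar t x → ReflTransGen R (σ x) (τ x)) →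
      ReflTransGen R (subst σ t) (subst τ t) := by
  induction h with
  | var n => exact fun hσ => hσ n rfl
  | sym h => exact fun _ => .refl
  | app _ _ ih₁ ih₂ =>
    exact fun hσ =>
      star_app hl hr (ih₁ fun x hx => hσ x (.inl hx)) (ih₂ fun x hx => hσ x (.inr hx))

/-- The number of nodes of a term. -/
def size : Tm Sig → ℕ
  | var _ => 1
  | sym _ => 1
  | app t u => size t + size u + 1
  | lam t => size t + 1

theorem Alg.size_le {a : Sig → ℕ} {k : ℕ} {t : Tm Sig} (h : Alg a k t) {σ : ℕ → Tm Sig}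
    {x : ℕ} : FVar t x → size (σ x) ≤ size (subst σ t) := by
  induction h with
  | var n => rintro rfl; exact le_rfl
  | sym h => exact False.elim
  | app _ _ ih₁ ih₂ =>
    rintro (hx | hx)
    · have := ih₁ hx; simp only [subst, size]; omega
    · have := ih₂ hx; simp only [subst, size]; omega

theorem Alg.size_lt {a : Sig → ℕ} {k : ℕ} {t : Tm Sig} (h : Alg a k t) (hs : SymHead t)
    {σ : ℕ → Tm Sig} {x : ℕ} (hx : FVar t x) : size (σ x) < size (subst σ t) := by
  cases h with
  | var n => exact hs.elim
  | sym h => exact hx.elim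
  | app h₁ h₂ =>
    rcases hx with hx | hx
    · have := h₁.size_le (σ := σ) hx; simp only [subst, size]; omega
    · have := h₂.size_le (σ := σ) hx; simp only [subst, size]; omega

/-- An algebraic pattern `l` is preserved by evaluation: the normal form of `lσ` is obtained by
normalizing `σ` on the variables of `l`. Uniqueness of normal forms makes this consistent
for nonlinear `l`. -/
theorem Alg.std_decomp {a : Sig → ℕ} {k : ℕ} {l : Tm Sig} (h : Alg a k l) (σ : ℕ → Tm Sig) :
    ∀ (j : ℕ) (n : Tm Sig), Std (subst σ l) n → NF a j n →
      n = subst (fun x => nf a (σ x)) l ∧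
        ∀ x, FVar l x → Std (σ x) (nf a (σ x)) ∧ NF a 0 (nf a (σ x)) := by
  induction h with
  | var m =>
    intro j n hs hn
    have hn₀ := hn.mono 0 (Nat.zero_le _)
    have e : nf a (σ m) = n := nf_eq hs.to_beta hn₀
    refine ⟨e.symm, ?_⟩
    rintro x rfl
    rw [e]
    exact ⟨hs, hn₀⟩
  | sym _ =>
    intro j n hs _
    cases SymHead.stdIn (t := subst σ (Tm.sym _)) trivial hs
    exact ⟨rfl, fun x hx => hx.elim⟩
  | @app k t u h₁ _ ih₁ ih₂ =>
    intro j n hs hn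
    have hsym : SymHead (subst σ (Tm.app t u)) :=
      SymHead.subst σ (t := t) (h₁.symHead (Nat.succ_pos _))
    cases hsym.stdIn hs with
    | app hs₁ hs₂ =>
      cases hn with
      | app hn₁ hn₂ =>
        obtain ⟨e₁, H₁⟩ := ih₁ _ _ hs₁ hn₁
        obtain ⟨e₂, H₂⟩ := ih₂ _ _ hs₂ hn₂
        refine ⟨?_, fun x hx => hx.elim (H₁ x) (H₂ x)⟩
        rw [e₁, e₂]; rfl

/-! ### Nested parallel rewriting -/

/-- Nested parallel `R(β)_i`-rewriting: `lσ` rewrites to `rτ` if `lσ → rσ` is a rooted step and `σ`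
rewrites to `τ`. -/
inductive NestPar (Rules : Set (CondRule Sig)) (i : ℕ) : Tm Sig → Tm Sig → Prop
  | var (n : ℕ) : NestPar Rules i (var n) (var n)
  | sym (f : Sig) : NestPar Rules i (sym f) (sym f)
  | app {t t' u u' : Tm Sig} : NestPar Rules i t t' → NestPar Rules i u u' →
      NestPar Rules i (app t u) (app t' u')
  | lam {t t' : Tm Sig} : NestPar Rules i t t' → NestPar Rules i (lam t) (lam t')
  | rule {ρ : CondRule Sig} {σ τ : ℕ → Tm Sig} : RootedBStep Rules i ρ σ →
      (∀ n, NestPar Rules i (σ n) (τ n)) → NestPar Rules i (subst σ ρ.lhs) (subst τ ρ.rhs)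

section

variable {Rules : Set (CondRule Sig)} {i : ℕ}

theorem NestPar.refl : ∀ t : Tm Sig, NestPar Rules i t t
  | .var n => .var n
  | .sym f => .sym f
  | .app t u => .app (NestPar.refl t) (NestPar.refl u)
  | .lam t => .lam (NestPar.refl t)

theorem bcondRel_subst (σ : ℕ → Tm Sig) {t u : Tm Sig} (h : BCondRel Rules i t u) :
    BCondRel Rules i (subst σ t) (subst σ u) := by
  cases i with
  | zero => exact h
  | succ i => exact .substC σ h

theorem rootedBStep_mem {ρ : CondRule Sig} {σ : ℕ → Tm Sig} (h : RootedBStep Rules i ρ σ) :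
    ρ ∈ Rules := by
  cases i with
  | zero => exact h.elim
  | succ i => exact h.1

theorem rootedBStep_subst {ρ : CondRule Sig} {σ : ℕ → Tm Sig} (h : RootedBStep Rules i ρ σ)
    (θ : ℕ → Tm Sig) : RootedBStep Rules i ρ (fun n => subst θ (σ n)) := by
  cases i with
  | zero => exact h
  | succ i =>
    refine ⟨h.1, fun p hp => ?_⟩
    obtain ⟨v, hv₁, hv₂⟩ := h.2 p hp
    have hstep : ∀ a b : Tm Sig, (Beta a b ∨ BCondRel Rules i a b) →
        (Beta (subst θ a) (subst θ b) ∨ BCondRel Rules i (subst θ a) (subst θ b)) :=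
      fun a b => Or.imp (.substC θ) (bcondRel_subst θ)
    rw [← subst_subst, ← subst_subst]
    exact ⟨subst θ v, hv₁.lift _ hstep, hv₂.lift _ hstep⟩

theorem NestPar.subst_same {t t' : Tm Sig} (h : NestPar Rules i t t') :
    ∀ θ : ℕ → Tm Sig, NestPar Rules i (subst θ t) (subst θ t') := by
  induction h with
  | var n => exact fun θ => NestPar.refl _
  | sym f => exact fun θ => NestPar.refl _
  | app _ _ ih₁ ih₂ => exact fun θ => .app (ih₁ θ) (ih₂ θ)
  | lam _ ih => exact fun θ => .lam (ih _)
  | rule hr _ ih =>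
    intro θ
    rw [subst_subst, subst_subst]
    exact .rule (rootedBStep_subst hr θ) fun n => ih n θ

theorem NestPar.subst {t t' : Tm Sig} (h : NestPar Rules i t t') :
    ∀ θ θ' : ℕ → Tm Sig, (∀ n, NestPar Rules i (θ n) (θ' n)) →
      NestPar Rules i (subst θ t) (subst θ' t') := by
  induction h with
  | var n => exact fun θ θ' hθ => hθ n
  | sym f => exact fun θ θ' _ => NestPar.refl _
  | app _ _ ih₁ ih₂ => exact fun θ θ' hθ => .app (ih₁ _ _ hθ) (ih₂ _ _ hθ)
  | lam _ ih =>
    refine fun θ θ' hθ => .lam (ih _ _ fun n => ?_)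
    cases n with
    | zero => exact NestPar.refl _
    | succ n => simp only [up, lift_zero_subst]; exact (hθ n).subst_same _
  | rule hr _ ih =>
    intro θ θ' hθ
    rw [subst_subst, subst_subst]
    exact .rule (rootedBStep_subst hr θ) fun n => ih n θ θ' hθ

theorem NestPar.subst1 {t t' u u' : Tm Sig} (ht : NestPar Rules i t t')
    (hu : NestPar Rules i u u') : NestPar Rules i (subst1 u t) (subst1 u' t') :=
  ht.subst _ _ fun n => by cases n <;> first | exact hu | exact NestPar.refl _

theorem NestPar.of_bcondRel {t u : Tm Sig} (h : BCondRel Rules (i + 1) t u) :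
    NestPar Rules (i + 1) t u := by
  change CondStep Rules _ t u at h
  induction h with
  | rule hρ σ hc => exact .rule ⟨hρ, hc⟩ fun n => NestPar.refl _
  | abs _ ih => exact .lam ih
  | appL _ ih => exact .app ih (NestPar.refl _)
  | appR _ ih => exact .app (NestPar.refl _) ih
  | substC σ _ ih => exact ih.subst_same σ

/-! ### Rewriting of normal forms -/

theorem condRel_lam {t u : Tm Sig} (h : CondRel Rules i t u) :
    CondRel Rules i (lam t) (lam u) := by
  cases i with
  | zero => exact h
  | succ i => exact .abs h

theorem condRel_appL {t u v : Tm Sig} (h : CondRel Rules i t u) :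
    CondRel Rules i (app t v) (app u v) := by
  cases i with
  | zero => exact h
  | succ i => exact .appL h

theorem condRel_appR {t u v : Tm Sig} (h : CondRel Rules i t u) :
    CondRel Rules i (app v t) (app v u) := by
  cases i with
  | zero => exact h
  | succ i => exact .appR h

variable {a : Sig → ℕ}

theorem lhs_lacks (harr : SysRespectsArity a Rules) {ρ : CondRule Sig} (hρ : ρ ∈ Rules) :
    Lacks a 0 ρ.lhs := by
  obtain ⟨_, _, _, f, ls, e, hl⟩ := harr ρ hρ
  rw [e]
  refine Lacks.appList ls _ 0 ?_
  rw [Nat.zero_add, hl]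
  exact .sym f

/-- A head β-step commutes with nested parallel rewriting, since no instance of a left-hand side
lies on the spine leading to a head β-redex. -/
theorem NestPar.head_step (harr : SysRespectsArity a Rules) {t s : Tm Sig} (h : HeadAux t s) :
    ∀ u, NestPar Rules i t u → ∃ v, HeadAux u v ∧ NestPar Rules i s v := by
  have key : ∀ {t s : Tm Sig}, HeadAux t s → ∀ {u}, NestPar Rules i t u →
      ∃ t₁ t₂ u₁ u₂, t = Tm.app t₁ t₂ ∧ u = Tm.app u₁ u₂ ∧ NestPar Rules i t₁ u₁ ∧
        NestPar Rules i t₂ u₂ := by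
    intro t s h u hu
    cases hu with
    | var n => cases h
    | sym f => cases h
    | app h₁ h₂ => exact ⟨_, _, _, _, rfl, rfl, h₁, h₂⟩
    | lam _ => cases h
    | rule hr _ =>
      exact (SymHead.not_headAux h ((lhs_lacks harr (rootedBStep_mem hr)).symHead.subst _)).elim
  induction h with
  | beta b c =>
    intro u hu
    obtain ⟨t₁, t₂, u₁, u₂, e, rfl, h₁, h₂⟩ := key (.beta b c) hu
    cases e
    generalize e : Tm.lam b = s at h₁
    cases h₁ with
    | lam h₁ => cases e; exact ⟨_, .beta _ _, h₁.subst1 h₂⟩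
    | rule hr _ =>
      have hsym := fun σ => (lhs_lacks harr (rootedBStep_mem hr)).symHead.subst σ
      exact (e ▸ hsym _ : SymHead (Tm.lam b)).elim
    | _ => cases e
  | app v h ih =>
    intro u hu
    obtain ⟨t₁, t₂, u₁, u₂, e, rfl, h₁, h₂⟩ := key (.app v h) hu
    cases e
    obtain ⟨w, hw, hw'⟩ := ih _ h₁
    exact ⟨_, .app _ hw, .app hw' h₂⟩

theorem NestPar.head_comm (harr : SysRespectsArity a Rules) {t s u : Tm Sig}
    (h : ReflTransGen HeadAux t s) (hu : NestPar Rules i t u) :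
    ∃ v, ReflTransGen HeadAux u v ∧ NestPar Rules i s v := by
  induction h with
  | refl => exact ⟨u, .refl, hu⟩
  | tail _ h ih =>
    obtain ⟨v, hv, hv'⟩ := ih
    obtain ⟨w, hw, hsw⟩ := NestPar.head_step harr h v hv'
    exact ⟨w, hv.tail hw, hsw⟩

/-- `S` simulates `R` on β-normal forms: if `t` has the arity-respecting β-normal form `n` and
`R t u`, then `u` has an arity-respecting β-normal form, and `n` reaches it by `S`-steps. -/
def Simulates (a : Sig → ℕ) (R S : Tm Sig → Tm Sig → Prop) : Prop :=
  ∀ t u n, R t u → ReflTransGen Beta t n → NF a 0 n →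
    ∃ n', ReflTransGen Beta u n' ∧ NF a 0 n' ∧ ReflTransGen S n n'

theorem Simulates.star {R S : Tm Sig → Tm Sig → Prop} (h : Simulates a R S) :
    Simulates a (ReflTransGen R) S := by
  intro t u n hs ht hn
  induction hs with
  | refl => exact ⟨n, ht, hn, .refl⟩
  | tail _ hs ih =>
    obtain ⟨m, hm, hm', hnm⟩ := ih
    obtain ⟨m₂, h₁, h₂, h₃⟩ := h _ _ m hs hm hm'
    exact ⟨m₂, h₁, h₂, hnm.trans h₃⟩

theorem Simulates.joinable {R S : Tm Sig → Tm Sig → Prop} (h : Simulates a R S)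
    {t u n m : Tm Sig} (hj : Joinable R t u) (ht : ReflTransGen Beta t n) (hn : NF a 0 n)
    (hu : ReflTransGen Beta u m) (hm : NF a 0 m) : Joinable S n m := by
  obtain ⟨v, hv₁, hv₂⟩ := hj
  obtain ⟨w₁, hw₁, hn₁, hs₁⟩ := h.star _ _ _ hv₁ ht hn
  obtain ⟨w₂, hw₂, hn₂, hs₂⟩ := h.star _ _ _ hv₂ hu hm
  obtain rfl := hn₁.unique hn₂ hw₁ hw₂
  exact ⟨w₁, hs₁, hs₂⟩

/-- The induction step on the stratum. It proceeds by induction on the size of the normal form,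
so that the induction hypothesis applies to the values of the substitution of a rewrite step. -/
theorem NestPar.normalForm (halg : AlgebraicSys Rules) (harr : SysRespectsArity a Rules)
    (hsim : Simulates a (fun t u => Beta t u ∨ BCondRel Rules i t u) (CondRel Rules i)) (N : ℕ) :
    ∀ n, size n ≤ N → ∀ k, NF a k n → ∀ t u, Std t n → NestPar Rules (i + 1) t u →
      ∃ n', ReflTransGen Beta u n' ∧ NF a k n' ∧ ReflTransGen (CondRel Rules (i + 1)) n n' := by
  induction N with
  | zero => intro n hn; cases n <;> simp [size] at hn
  | succ N IH =>
    intro n hsize k hn t u hs hu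
    obtain ⟨hh, hin⟩ := hs
    obtain ⟨u', huu', hu⟩ := NestPar.head_comm harr hh hu
    suffices H : ∃ n', ReflTransGen Beta u' n' ∧ NF a k n' ∧
        ReflTransGen (CondRel Rules (i + 1)) n n' by
      obtain ⟨n', h₁, h₂⟩ := H
      exact ⟨n', (star_mono (fun _ _ => headAux_beta) huu').trans h₁, h₂⟩
    cases hu with
    | var m => cases hin; exact ⟨_, .refl, hn, .refl⟩
    | sym f => cases hin; exact ⟨_, .refl, hn, .refl⟩
    | app hu₁ hu₂ =>
      cases hin with
      | app hs₁ hs₂ =>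
        cases hn with
        | app hn₁ hn₂ =>
          simp only [size] at hsize
          obtain ⟨m₁, h₁, h₁', h₁''⟩ := IH _ (by omega) _ hn₁ _ _ hs₁ hu₁
          obtain ⟨m₂, h₂, h₂', h₂''⟩ := IH _ (by omega) _ hn₂ _ _ hs₂ hu₂
          exact ⟨.app m₁ m₂, star_app .appL .appR h₁ h₂, .app h₁' h₂',
            star_app condRel_appL condRel_appR h₁'' h₂''⟩
    | lam hu₁ =>
      cases hin with
      | lam hs₁ =>
        cases hn with
        | lam hn₁ =>
          simp only [size] at hsize
          obtain ⟨m₁, h₁, h₁', h₁''⟩ := IH _ (by omega) _ hn₁ _ _ hs₁ hu₁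
          exact ⟨.lam m₁, h₁.lift _ fun _ _ => .abs, .lam h₁', h₁''.lift _ fun _ _ => condRel_lam⟩
    | @rule ρ σ τ hr hστ =>
      obtain ⟨hρ, hconds⟩ := hr
      obtain ⟨hdc, hlr, hrr, _⟩ := harr ρ hρ
      obtain ⟨hdca, hra⟩ := halg ρ hρ
      have hl : Alg a 0 ρ.lhs := .of_algebraic ρ.lhs_alg hlr
      have hr : Alg a 0 ρ.rhs := .of_algebraic hra hrr
      have hlack := lhs_lacks harr hρ
      obtain ⟨rfl, hσ⟩ := hl.std_decomp σ k _ hin.std hn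
      -- Since `lσ` exhausts the arity, no further argument is possible: `k = 0`.
      obtain rfl := Nat.le_zero.1 (hlack.le _ k hn)
      have heval : ∀ d, Alg a 0 d → (∀ x, FVar d x → FVar ρ.lhs x) →
          ReflTransGen Beta (Tm.subst σ d) (Tm.subst (fun x => nf a (σ x)) d) ∧
            NF a 0 (Tm.subst (fun x => nf a (σ x)) d) := fun d hd hfv =>
        ⟨hd.subst_star .appL .appR fun x hx => (hσ x (hfv x hx)).1.to_beta,
          hd.subst_NF fun x hx => (hσ x (hfv x hx)).2⟩
      have hstep : CondRel Rules (i + 1) (Tm.subst (fun x => nf a (σ x)) ρ.lhs)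
          (Tm.subst (fun x => nf a (σ x)) ρ.rhs) := by
        refine CondStep.rule hρ _ fun p hp => ?_
        obtain ⟨hd, hd'⟩ := heval p.1 (.of_algebraic (hdca p hp).1 (hdc p hp).1) (ρ.fv_conds p hp).1
        obtain ⟨hc, hc'⟩ := heval p.2 (.of_algebraic (hdca p hp).2 (hdc p hp).2) (ρ.fv_conds p hp).2
        exact hsim.joinable (hconds p hp) hd hd' hc hc'
      have hτ : ∀ x, ∃ m, FVar ρ.lhs x → ReflTransGen Beta (τ x) m ∧ NF a 0 m ∧
          ReflTransGen (CondRel Rules (i + 1)) (nf a (σ x)) m := by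
        intro x
        by_cases hx : FVar ρ.lhs x
        · have hlt := hl.size_lt hlack.symHead (σ := fun x => nf a (σ x)) hx
          obtain ⟨m, hm⟩ := IH (nf a (σ x)) (by omega) 0 (hσ x hx).2 _ _ (hσ x hx).1 (hστ x)
          exact ⟨m, fun _ => hm⟩
        · exact ⟨.var 0, fun h => (hx h).elim⟩
      choose τ' hτ' using hτ
      have hfv := ρ.fv_rhs
      exact ⟨Tm.subst τ' ρ.rhs, hr.subst_star .appL .appR fun x hx => (hτ' x (hfv x hx)).1,
        hr.subst_NF fun x hx => (hτ' x (hfv x hx)).2.1,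
        .head hstep (hr.subst_star condRel_appL condRel_appR fun x hx => (hτ' x (hfv x hx)).2.2)⟩

/-- `R_i`-rewriting on β-normal forms simulates `β ∪ R(β)_i`. -/
theorem simulates_bcondRel (halg : AlgebraicSys Rules) (harr : SysRespectsArity a Rules) (i : ℕ) :
    Simulates a (fun t u => Beta t u ∨ BCondRel Rules i t u) (CondRel Rules i) := by
  have hbeta : ∀ i, ∀ t u n : Tm Sig, Beta t u → ReflTransGen Beta t n → NF a 0 n →
      ∃ n', ReflTransGen Beta u n' ∧ NF a 0 n' ∧ ReflTransGen (CondRel Rules i) n n' := by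
    intro i t u n h ht hn
    obtain ⟨w, hw₁, hw₂⟩ := beta_confluent (.single h) ht
    obtain rfl := hn.eq_of_star hw₂
    exact ⟨_, hw₁, hn, .refl⟩
  induction i with
  | zero => exact fun t u n h => h.elim (hbeta 0 t u n) False.elim
  | succ i ih =>
    rintro t u n (h | h) ht hn
    · exact hbeta _ t u n h ht hn
    · exact NestPar.normalForm halg harr ih _ n le_rfl 0 hn t u (.of_beta ht) (.of_bcondRel h)

theorem condRel_bcondRel (i : ℕ) :
    ∀ t u : Tm Sig, CondRel Rules i t u → BCondRel Rules i t u := by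
  induction i with
  | zero => exact fun _ _ h => h
  | succ i IH =>
    intro t u h
    change CondStep Rules _ t u at h
    change CondStep Rules _ t u
    induction h with
    | rule hρ σ hc =>
      refine .rule hρ σ fun p hp => ?_
      obtain ⟨v, hv₁, hv₂⟩ := hc p hp
      exact ⟨v, star_mono (fun _ _ h => .inr (IH _ _ h)) hv₁,
        star_mono (fun _ _ h => .inr (IH _ _ h)) hv₂⟩
    | abs _ ih => exact .abs ih
    | appL _ ih => exact .appL ih
    | appR _ ih => exact .appR ih
    | substC σ _ ih => exact .substC σ ih

end

end BetaCond

/-- If `R` is algebraic and respects the arity `a`, and `→_R` is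
confluent on `AN_a`, then `→_{β∪R(β)}` is confluent on `AN_a`. -/
theorem confluence_beta_union_bcond_on_AN {Sig : Type} (a : Sig → ℕ)
    (Rules : Set (CondRule Sig))
    (halg : AlgebraicSys Rules) (harr : SysRespectsArity a Rules)
    (hconf : ConfluentOn (ANset a) (CondRew Rules)) :
    ConfluentOn (ANset a) (fun t u : Tm Sig => Beta t u ∨ BCondRew Rules t u) := by
  have hsim : BetaCond.Simulates a (fun t u : Tm Sig => Beta t u ∨ BCondRew Rules t u)
      (CondRew Rules) := by
    have lift : ∀ i, ∀ t u n : Tm Sig, (Beta t u ∨ BCondRel Rules i t u) →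
        Relation.ReflTransGen Beta t n → BetaCond.NF a 0 n →
        ∃ n', Relation.ReflTransGen Beta u n' ∧ BetaCond.NF a 0 n' ∧
          Relation.ReflTransGen (CondRew Rules) n n' := by
      intro i t u n h ht hn
      obtain ⟨n', h₁, h₂, h₃⟩ := BetaCond.simulates_bcondRel halg harr i t u n h ht hn
      exact ⟨n', h₁, h₂, BetaCond.star_mono (fun _ _ h => ⟨i, h⟩) h₃⟩
    rintro t u n (h | ⟨i, h⟩) ht hn
    · exact lift 0 t u n (.inl h) ht hn
    · exact lift i t u n (.inr h) ht hn
  have hback : ∀ {x n w : Tm Sig}, Relation.ReflTransGen Beta x n →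
      Relation.ReflTransGen (CondRew Rules) n w →
      Relation.ReflTransGen (fun t u : Tm Sig => Beta t u ∨ BCondRew Rules t u) x w :=
    fun h₁ h₂ => (BetaCond.star_mono (fun _ _ h => .inl h) h₁).trans
      (BetaCond.star_mono (fun _ _ ⟨i, h⟩ => .inr ⟨i, BetaCond.condRel_bcondRel i _ _ h⟩) h₂)
  intro t ht u v hu hv
  obtain ⟨n, htn, hn⟩ := BetaCond.mem_ANset_iff.1 ht
  obtain ⟨nu, hu₁, _, hu₂⟩ := hsim.star _ _ _ hu htn hn
  obtain ⟨nv, hv₁, _, hv₂⟩ := hsim.star _ _ _ hv htn hn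
  obtain ⟨w, hw₁, hw₂⟩ := hconf n (BetaCond.mem_ANset_iff.2 ⟨n, .refl, hn⟩) nu nv hu₂ hv₂
  exact ⟨w, hback hu₁ hw₁, hback hv₁ hw₂⟩
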